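/- (Theorem 2, abstract local linear convergence) Let f : ℝⁿ → ℝ, let (α_k) be a sequence in ℝⁿ converging to α* ∈ ℝⁿ with f(α_k) ≥ f(α*) for all k, and suppose there exist γ_max > 0, c̄ > 0, c_φ > 0 and K₀ ∈ ℕ such that for all k ≥ K₀: (i) f(α_k) − f(α_{k+1}) ≥ (1/(2γ_max))·‖α_{k+1} − α_k‖², and (ii) ‖α_{k+1} − α_k‖ ≥ (2/(c̄·c_φ))·√(f(α_{k+1}) − f(α*)). Then, setting m = (1 + 2/(γ_max·c_φ²·c̄²))^{−1/2}, one has m ∈ (0,1) and there exists C > 0 such that ‖α_k − α*‖ ≤ C·m^k for all k ≥ K₀. -/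

import Mathlib

/-!
Sufficient decrease bounds the gap `f (α k) - f α*` from below by the next gap plus a multiple of
the squared step. By the Kurdyka–Łojasiewicz bound the squared step is in turn at least a multiple
of the next gap, so the gaps shrink by the factor `m ^ 2 = (1 + 2 / (γ_max c_φ² c̄²))⁻¹`. Sufficient
decrease also bounds the step by a multiple of the square root of the gap, so the steps are
dominated by a geometric sequence of ratio `m`, and summing them from `k` on bounds the distance to
the limit.
-/

open Filter Topology

lemma rpow_neg_half_sq {x : ℝ} (hx : 0 ≤ x) : (x ^ (-(1 / 2 : ℝ))) ^ 2 = x⁻¹ := by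
  rw [Real.rpow_neg hx, ← Real.sqrt_eq_rpow, inv_pow, Real.sq_sqrt hx]

lemma rpow_neg_half_mem_Ioo {x : ℝ} (hx : 1 < x) : x ^ (-(1 / 2 : ℝ)) ∈ Set.Ioo 0 1 :=
  ⟨Real.rpow_pos_of_pos (one_pos.trans hx) _,
    Real.rpow_lt_one_of_one_lt_of_neg hx (by norm_num)⟩

lemma one_add_mul_le_of_sq_le_sub_of_sqrt_le {A c d v w : ℝ} (hA : 0 ≤ A) (hc : 0 ≤ c)
    (hw : 0 ≤ w) (hdecrease : A * d ^ 2 ≤ v - w) (hstep : c * √w ≤ d) :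
    (1 + A * c ^ 2) * w ≤ v := by
  have hsq : c ^ 2 * w ≤ d ^ 2 := by
    calc c ^ 2 * w = (c * √w) ^ 2 := by rw [mul_pow, Real.sq_sqrt hw]
      _ ≤ d ^ 2 := by gcongr
  calc (1 + A * c ^ 2) * w = w + A * (c ^ 2 * w) := by ring
    _ ≤ w + A * d ^ 2 := by gcongr
    _ ≤ v := by linarith

lemma exists_pos_forall_le_mul_pow_of_shift {u : ℕ → ℝ} {D m : ℝ} {K : ℕ} (hm : 0 < m)
    (hu : ∀ j, u (j + K) ≤ D * m ^ j) :
    ∃ C, 0 < C ∧ ∀ k, K ≤ k → u k ≤ C * m ^ k := by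
  refine ⟨max D 1 / m ^ K, by positivity, fun k hk ↦ ?_⟩
  obtain ⟨j, rfl⟩ := Nat.exists_eq_add_of_le' hk
  calc u (j + K) ≤ D * m ^ j := hu j
    _ ≤ max D 1 * m ^ j := by gcongr; exact le_max_left D 1
    _ = max D 1 / m ^ K * m ^ (j + K) := by rw [pow_add]; field_simp

section Descent

variable {X : Type*} [PseudoMetricSpace X] {x : ℕ → X} {v : ℕ → ℝ} {A m : ℝ}

lemma dist_succ_le_of_sufficient_decrease (hA : 0 < A) (hm : 0 ≤ m) (hv : ∀ k, 0 ≤ v k)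
    (hdecrease : ∀ k, A * dist (x (k + 1)) (x k) ^ 2 ≤ v k - v (k + 1))
    (hcontract : ∀ k, v (k + 1) ≤ m ^ 2 * v k) (k : ℕ) :
    dist (x k) (x (k + 1)) ≤ √(v 0 / A) * m ^ k := by
  have hgap : v k ≤ (m ^ 2) ^ k * v 0 := le_geom (sq_nonneg m) k fun j _ ↦ hcontract j
  have hsq : dist (x (k + 1)) (x k) ^ 2 ≤ v 0 / A * (m ^ k) ^ 2 := by
    calc dist (x (k + 1)) (x k) ^ 2 ≤ v k / A := by
          rw [le_div_iff₀' hA]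
          linarith [hdecrease k, hv (k + 1)]
      _ ≤ (m ^ 2) ^ k * v 0 / A := by gcongr
      _ = v 0 / A * (m ^ k) ^ 2 := by ring
  rw [dist_comm]
  calc dist (x (k + 1)) (x k) ≤ √(v 0 / A * (m ^ k) ^ 2) := Real.le_sqrt_of_sq_le hsq
    _ = √(v 0 / A) * m ^ k := by
      rw [Real.sqrt_mul' _ (sq_nonneg _), Real.sqrt_sq (pow_nonneg hm k)]

lemma dist_le_geometric_of_sufficient_decrease {a : X} (hA : 0 < A) (hm : m ∈ Set.Ico 0 1)
    (hlim : Tendsto x atTop (𝓝 a)) (hv : ∀ k, 0 ≤ v k)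
    (hdecrease : ∀ k, A * dist (x (k + 1)) (x k) ^ 2 ≤ v k - v (k + 1))
    (hcontract : ∀ k, v (k + 1) ≤ m ^ 2 * v k) (k : ℕ) :
    dist (x k) a ≤ √(v 0 / A) / (1 - m) * m ^ k := by
  rw [div_mul_eq_mul_div]
  exact dist_le_of_le_geometric_of_tendsto m _ hm.2
    (dist_succ_le_of_sufficient_decrease hA hm.1 hv hdecrease hcontract) hlim k

lemma dist_le_geometric_of_sufficient_decrease_of_sqrt_le {a : X} {c : ℝ} (hA : 0 < A)
    (hc : 0 < c) (hlim : Tendsto x atTop (𝓝 a)) (hv : ∀ k, 0 ≤ v k)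
    (hdecrease : ∀ k, A * dist (x (k + 1)) (x k) ^ 2 ≤ v k - v (k + 1))
    (hstep : ∀ k, c * √(v (k + 1)) ≤ dist (x (k + 1)) (x k))
    (hm : m = (1 + A * c ^ 2) ^ (-(1 / 2 : ℝ))) (k : ℕ) :
    dist (x k) a ≤ √(v 0 / A) / (1 - m) * m ^ k := by
  have hq : 0 < A * c ^ 2 := by positivity
  have hm_mem : m ∈ Set.Ioo 0 1 := hm ▸ rpow_neg_half_mem_Ioo (lt_add_of_pos_right 1 hq)
  have hcontract (j : ℕ) : v (j + 1) ≤ m ^ 2 * v j := by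
    rw [hm, rpow_neg_half_sq (by positivity), le_inv_mul_iff₀ (by positivity)]
    exact one_add_mul_le_of_sq_le_sub_of_sqrt_le hA.le hc.le (hv (j + 1)) (hdecrease j) (hstep j)
  exact dist_le_geometric_of_sufficient_decrease hA ⟨hm_mem.1.le, hm_mem.2⟩ hlim hv hdecrease
    hcontract k

end Descent

theorem abstract_local_linear_convergence_general {X : Type*} [PseudoMetricSpace X] {f : X → ℝ}
    {α : ℕ → X} {αstar : X} {fstar γmax cbar cφ : ℝ} {K₀ : ℕ}
    (hlim : Tendsto α atTop (𝓝 αstar)) (hge : ∀ k, K₀ ≤ k → fstar ≤ f (α k))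
    (hγ : 0 < γmax) (hcbar : 0 < cbar) (hcφ : 0 < cφ)
    (hdecrease : ∀ k, K₀ ≤ k →
      1 / (2 * γmax) * dist (α (k + 1)) (α k) ^ 2 ≤ f (α k) - f (α (k + 1)))
    (hstep : ∀ k, K₀ ≤ k →
      2 / (cbar * cφ) * √(f (α (k + 1)) - fstar) ≤ dist (α (k + 1)) (α k)) :
    (0 < (1 + 2 / (γmax * cφ ^ 2 * cbar ^ 2)) ^ (-(1 / 2 : ℝ)) ∧
      (1 + 2 / (γmax * cφ ^ 2 * cbar ^ 2)) ^ (-(1 / 2 : ℝ)) < 1) ∧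
    ∃ C : ℝ, 0 < C ∧ ∀ k : ℕ, K₀ ≤ k →
      dist (α k) αstar ≤ C * ((1 + 2 / (γmax * cφ ^ 2 * cbar ^ 2)) ^ (-(1 / 2 : ℝ))) ^ k := by
  have hq : 2 / (γmax * cφ ^ 2 * cbar ^ 2) = 1 / (2 * γmax) * (2 / (cbar * cφ)) ^ 2 := by
    field_simp
  have hm := rpow_neg_half_mem_Ioo (x := 1 + 2 / (γmax * cφ ^ 2 * cbar ^ 2))
    (lt_add_of_pos_right 1 (by positivity))
  have hdecrease_shift (j : ℕ) : 1 / (2 * γmax) * dist (α (j + 1 + K₀)) (α (j + K₀)) ^ 2 ≤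
      (f (α (j + K₀)) - fstar) - (f (α (j + 1 + K₀)) - fstar) := by
    rw [sub_sub_sub_cancel_right, Nat.add_right_comm]
    exact hdecrease _ (Nat.le_add_left K₀ j)
  have hstep_shift (j : ℕ) : 2 / (cbar * cφ) * √(f (α (j + 1 + K₀)) - fstar) ≤
      dist (α (j + 1 + K₀)) (α (j + K₀)) := by
    rw [Nat.add_right_comm]
    exact hstep _ (Nat.le_add_left K₀ j)
  exact ⟨hm, exists_pos_forall_le_mul_pow_of_shift hm.1 <|
    dist_le_geometric_of_sufficient_decrease_of_sqrt_le (x := fun j ↦ α (j + K₀))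
      (v := fun j ↦ f (α (j + K₀)) - fstar) (by positivity) (by positivity)
      (hlim.comp (tendsto_add_atTop_nat K₀))
      (fun j ↦ sub_nonneg.2 (hge _ (Nat.le_add_left K₀ j)))
      hdecrease_shift hstep_shift (by rw [hq])⟩

/-- **Theorem 2: abstract local linear convergence.** Let `f : ℝⁿ → ℝ`, let `(α_k)` be a
sequence in `ℝⁿ` converging to `α*` with `f(α_k) ≥ f(α*)` for all `k`, and suppose there
exist `γ_max > 0`, `c̄ > 0`, `c_φ > 0` and `K₀ ∈ ℕ` such that for all `k ≥ K₀`: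
(i) `f(α_k) − f(α_{k+1}) ≥ (1/(2γ_max))·‖α_{k+1} − α_k‖²`, and
(ii) `‖α_{k+1} − α_k‖ ≥ (2/(c̄·c_φ))·√(f(α_{k+1}) − f(α*))`.
Then, with `m = (1 + 2/(γ_max·c_φ²·c̄²))^(−1/2)`, one has `m ∈ (0,1)` and there exists
`C > 0` with `‖α_k − α*‖ ≤ C·m^k` for all `k ≥ K₀`. -/
theorem abstract_local_linear_convergence (n : ℕ)
    (f : EuclideanSpace ℝ (Fin n) → ℝ)
    (α : ℕ → EuclideanSpace ℝ (Fin n)) (αstar : EuclideanSpace ℝ (Fin n))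
    (hlim : Filter.Tendsto α Filter.atTop (nhds αstar))
    (hge : ∀ k : ℕ, f (α k) ≥ f αstar)
    (γmax cbar cφ : ℝ) (hγ : 0 < γmax) (hcbar : 0 < cbar) (hcφ : 0 < cφ) (K₀ : ℕ)
    (h1 : ∀ k : ℕ, K₀ ≤ k →
        f (α k) - f (α (k + 1)) ≥ (1 / (2 * γmax)) * ‖α (k + 1) - α k‖ ^ 2)
    (h2 : ∀ k : ℕ, K₀ ≤ k →
        ‖α (k + 1) - α k‖ ≥ (2 / (cbar * cφ)) * Real.sqrt (f (α (k + 1)) - f αstar)) :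
    (0 < (1 + 2 / (γmax * cφ ^ 2 * cbar ^ 2)) ^ (-(1 / 2 : ℝ)) ∧
      (1 + 2 / (γmax * cφ ^ 2 * cbar ^ 2)) ^ (-(1 / 2 : ℝ)) < 1) ∧
    ∃ C : ℝ, 0 < C ∧ ∀ k : ℕ, K₀ ≤ k →
      ‖α k - αstar‖ ≤ C * ((1 + 2 / (γmax * cφ ^ 2 * cbar ^ 2)) ^ (-(1 / 2 : ℝ))) ^ k := by
  simp only [← dist_eq_norm] at h1 h2 ⊢
  exact abstract_local_linear_convergence_general hlim (fun k _ ↦ hge k) hγ hcbar hcφ h1 h2
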